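/- arXiv:1506.06932 — 8 statements merged into one kernel-verified Lean document; each statement's English description precedes it below -/
import Mathlib

section
/- Let u, u' ∈ ℝ^N satisfy the RSS step (u' − u)/Δt + τ B(u' − u) = −A u for some Δt > 0. If τ ≥ β/2, then ⟨A u', u'⟩ ≤ ⟨A u, u⟩; that is, the RSS scheme is unconditionally energy stable. -/
open Matrix

/-- If `τ ≥ β/2`, one RSS step
`(u' − u)/Δt + τ B (u' − u) = − A u` satisfies `⟨A u', u'⟩ ≤ ⟨A u, u⟩`
for every `Δt > 0` (unconditional energy stability). -/
theorem rss_unconditional_energy_stability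
    {N : ℕ} (hN : 0 < N) (A B : Matrix (Fin N) (Fin N) ℝ)
    (hA : A.PosDef) (hB : B.PosDef)
    (α β : ℝ) (hα : 0 < α) (hαβ : α ≤ β)
    (hlow : ∀ u : Fin N → ℝ, α * (B.mulVec u ⬝ᵥ u) ≤ A.mulVec u ⬝ᵥ u)
    (hup : ∀ u : Fin N → ℝ, A.mulVec u ⬝ᵥ u ≤ β * (B.mulVec u ⬝ᵥ u))
    (τ Δt : ℝ) (hτ : 0 < τ) (hΔt : 0 < Δt)
    (hτβ : β / 2 ≤ τ)
    (u u' : Fin N → ℝ)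
    (hstep : (1 / Δt) • (u' - u) + τ • B.mulVec (u' - u) = -(A.mulVec u)) :
    A.mulVec u' ⬝ᵥ u' ≤ A.mulVec u ⬝ᵥ u := by
  obtain ⟨d, rfl⟩ : ∃ d, u' = u + d := ⟨u' - u, by simp⟩
  rw [add_sub_cancel_left] at hstep
  have h1 := congrArg (fun v => v ⬝ᵥ d) hstep
  simp only [add_dotProduct, smul_dotProduct, neg_dotProduct, smul_eq_mul] at h1
  have hAT : Aᵀ = A := by
    have h := hA.isHermitian.eq
    rwa [conjTranspose_eq_transpose_of_trivial] at h
  have hsym : A.mulVec d ⬝ᵥ u = A.mulVec u ⬝ᵥ d := by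
    rw [dotProduct_comm, dotProduct_mulVec, ← mulVec_transpose, hAT]
  have hBd : 0 ≤ B.mulVec d ⬝ᵥ d := by
    have h := hB.posSemidef.dotProduct_mulVec_nonneg d
    rw [dotProduct_comm]
    simpa using h
  have hdd : 0 ≤ (1 / Δt) * (d ⬝ᵥ d) :=
    mul_nonneg (by positivity) (Finset.sum_nonneg fun i _ => mul_self_nonneg (d i))
  have hu := hup d
  have hb := mul_le_mul_of_nonneg_right hτβ hBd
  rw [mulVec_add, add_dotProduct, dotProduct_add, dotProduct_add, hsym]
  linarith
end

section
/- Let u, u' ∈ ℝ^N satisfy the RSS step (u' − u)/Δt + τ B(u' − u) = −A u. If τ < β/2 and 0 < Δt < 2/((1 − 2τ/β)·ρ(A)), then ⟨A u', u'⟩ ≤ ⟨A u, u⟩. -/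
open Matrix

open scoped MatrixOrder Matrix.Norms.L2Operator in
lemma rss_rayleigh {N : ℕ} (A : Matrix (Fin N) (Fin N) ℝ) (hA : A.IsHermitian) (r : ℝ)
    (hr : ∀ i, hA.eigenvalues i ≤ r) (d : Fin N → ℝ) :
    A.mulVec d ⬝ᵥ d ≤ r * (d ⬝ᵥ d) := by
  have h1 : A ≤ algebraMap ℝ (Matrix (Fin N) (Fin N) ℝ) r := by
    apply le_algebraMap_of_spectrum_le (ha := hA)
    intro x hx
    rw [hA.spectrum_real_eq_range_eigenvalues] at hx
    obtain ⟨i, rfl⟩ := hx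
    exact hr i
  rw [Matrix.le_iff] at h1
  have h2 := h1.dotProduct_mulVec_nonneg d
  rw [Algebra.algebraMap_eq_smul_one, Matrix.sub_mulVec, Matrix.smul_mulVec, Matrix.one_mulVec,
    dotProduct_sub, dotProduct_smul, star_trivial, smul_eq_mul, dotProduct_comm d (A *ᵥ d)] at h2
  linarith

/-- If `τ < β/2` and `0 < Δt < 2/((1 − 2τ/β)·ρ(A))`, where `ρ(A)` is
the largest eigenvalue of `A`, then one RSS step
`(u' − u)/Δt + τ B (u' − u) = − A u` satisfies `⟨A u', u'⟩ ≤ ⟨A u, u⟩`. -/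
theorem rss_conditional_energy_stability
    {N : ℕ} (hN : 0 < N) (A B : Matrix (Fin N) (Fin N) ℝ)
    (hA : A.PosDef) (hB : B.PosDef)
    (α β : ℝ) (hα : 0 < α) (hαβ : α ≤ β)
    (hlow : ∀ u : Fin N → ℝ, α * (B.mulVec u ⬝ᵥ u) ≤ A.mulVec u ⬝ᵥ u)
    (hup : ∀ u : Fin N → ℝ, A.mulVec u ⬝ᵥ u ≤ β * (B.mulVec u ⬝ᵥ u))
    (τ Δt : ℝ) (hτ : 0 < τ)
    (hτβ : τ < β / 2)
    (hΔt : 0 < Δt)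
    (hΔt2 : Δt < 2 / ((1 - 2 * τ / β) * (⨆ i, hA.1.eigenvalues i)))
    (u u' : Fin N → ℝ)
    (hstep : (1 / Δt) • (u' - u) + τ • B.mulVec (u' - u) = -(A.mulVec u)) :
    A.mulVec u' ⬝ᵥ u' ≤ A.mulVec u ⬝ᵥ u := by
  have : Nonempty (Fin N) := ⟨⟨0, hN⟩⟩
  have hle : ∀ i, hA.1.eigenvalues i ≤ ⨆ i, hA.1.eigenvalues i :=
    fun i => le_ciSup (Set.finite_range _).bddAbove i
  have hpos : 0 < ⨆ i, hA.1.eigenvalues i :=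
    lt_of_lt_of_le (hA.eigenvalues_pos ⟨0, hN⟩) (hle _)
  generalize (⨆ i, hA.1.eigenvalues i) = r at *
  obtain ⟨d, rfl⟩ : ∃ d, u' = u + d := ⟨u' - u, by abel⟩
  rw [add_sub_cancel_left] at hstep
  have hR := rss_rayleigh A hA.1 r hle d
  have hβ : 0 < β := by linarith
  have hc : 0 < 1 - 2 * τ / β := by
    rw [sub_pos, div_lt_one hβ]; linarith
  have hs := congrArg (fun v => v ⬝ᵥ d) hstep
  simp only [add_dotProduct, smul_dotProduct, neg_dotProduct, smul_eq_mul] at hs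
  have hsym : A.mulVec d ⬝ᵥ u = A.mulVec u ⬝ᵥ d := by
    have hT : Aᵀ = A := by
      have h := hA.1.eq
      rwa [conjTranspose_eq_transpose_of_trivial] at h
    rw [dotProduct_comm, dotProduct_mulVec, ← mulVec_transpose, hT]
  have hd : 0 ≤ d ⬝ᵥ d := by simpa using dotProduct_star_self_nonneg d
  have hu := hup d
  simp only [mulVec_add, add_dotProduct, dotProduct_add, hsym]
  have h3 : (1 - 2 * τ / β) * r ≤ 2 * (1 / Δt) := by
    rw [lt_div_iff₀ (by positivity)] at hΔt2
    rw [mul_one_div, le_div_iff₀ hΔt]; linarith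
  have h4 := mul_le_mul_of_nonneg_right h3 hd
  have h5 := mul_le_mul_of_nonneg_left hR hc.le
  have h6 : 2 * τ / β * (A *ᵥ d ⬝ᵥ d) ≤ 2 * τ * (B *ᵥ d ⬝ᵥ d) := by
    have := mul_le_mul_of_nonneg_left hu (by positivity : 0 ≤ 2 * τ / β)
    rwa [← mul_assoc (2 * τ / β), div_mul_cancel₀ _ hβ.ne'] at this
  nlinarith
end

section
/- Let u^(k) be the RSS sequence defined by (u^(k+1) − u^(k))/Δt + τ B(u^(k+1) − u^(k)) = f − A u^(k), and v^(k) the backward Euler sequence defined by (v^(k+1) − v^(k))/Δt + A v^(k+1) = f, with u^(0) = v^(0). Let M = I − Δt (I + τΔt B)⁻¹ A and assume ‖M‖ < 1. Then there exists γ ∈ [0,1) such that for all k ≥ 0, ‖u^(k) − v^(k)‖ ≤ Δt² · ‖τB − A‖ · (1/(1 − γ)) · ‖f − A v^(0)‖. -/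
open Matrix

/-- The Euclidean norm of a vector of `ℝ^N`. -/
noncomputable def vnorm {N : ℕ} (w : Fin N → ℝ) : ℝ :=
  Real.sqrt (w ⬝ᵥ w)

/-- The operator norm of a matrix, induced by the Euclidean norm. -/
noncomputable def mopNorm {N : ℕ} (C : Matrix (Fin N) (Fin N) ℝ) : ℝ :=
  ‖LinearMap.toContinuousLinearMap (Matrix.toEuclideanLin C)‖

lemma vnorm_eq {N : ℕ} (w : Fin N → ℝ) : vnorm w = ‖(WithLp.toLp 2 w : EuclideanSpace ℝ (Fin N))‖ := by
  rw [EuclideanSpace.norm_eq, vnorm]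
  congr 1
  simp [dotProduct, pow_two]

lemma vnorm_mulVec_le {N : ℕ} (C : Matrix (Fin N) (Fin N) ℝ) (w : Fin N → ℝ) :
    vnorm (C *ᵥ w) ≤ mopNorm C * vnorm w := by
  rw [vnorm_eq, vnorm_eq]
  exact (LinearMap.toContinuousLinearMap (Matrix.toEuclideanLin C)).le_opNorm (WithLp.toLp 2 w)

lemma vnorm_sub_le {N : ℕ} (x y : Fin N → ℝ) : vnorm (x - y) ≤ vnorm x + vnorm y := by
  simp only [vnorm_eq, WithLp.toLp_sub]
  exact norm_sub_le _ _

lemma vnorm_smul {N : ℕ} (c : ℝ) (hc : 0 ≤ c) (x : Fin N → ℝ) : vnorm (c • x) = c * vnorm x := by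
  simp only [vnorm_eq, WithLp.toLp_smul, norm_smul, Real.norm_eq_abs, abs_of_nonneg hc]

lemma vnorm_le_add {N : ℕ} (C : Matrix (Fin N) (Fin N) ℝ) (hC : C.PosDef) (s : ℝ) (hs : 0 ≤ s)
    (x : Fin N → ℝ) : vnorm x ≤ vnorm (x + s • C *ᵥ x) := by
  unfold vnorm
  apply Real.sqrt_le_sqrt
  have h1 : 0 ≤ x ⬝ᵥ (C *ᵥ x) := by
    simpa using hC.posSemidef.dotProduct_mulVec_nonneg x
  have h2 : 0 ≤ (C *ᵥ x) ⬝ᵥ (C *ᵥ x) := by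
    simp only [dotProduct]
    exact Finset.sum_nonneg fun i _ => mul_self_nonneg _
  have h3 : (C *ᵥ x) ⬝ᵥ x = x ⬝ᵥ (C *ᵥ x) := dotProduct_comm _ _
  simp only [add_dotProduct, dotProduct_add, smul_dotProduct, dotProduct_smul, smul_eq_mul, h3]
  have := mul_nonneg hs h1
  have := mul_nonneg hs (mul_nonneg hs h2)
  linarith

/-- comparison of the RSS sequence with the backward Euler
sequence: if `M = I − Δt (I + τΔt B)⁻¹ A` satisfies `‖M‖ < 1`, then there
is `γ ∈ [0,1)` with
`‖u⁽ᵏ⁾ − v⁽ᵏ⁾‖ ≤ Δt² ‖τB − A‖ (1/(1−γ)) ‖f − A v⁽⁰⁾‖` for all `k`. -/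
theorem rss_vs_backward_euler
    {N : ℕ} (hN : 0 < N) (A B : Matrix (Fin N) (Fin N) ℝ)
    (hA : A.PosDef) (hB : B.PosDef)
    (f : Fin N → ℝ) (τ Δt : ℝ) (hτ : 0 < τ) (hΔt : 0 < Δt)
    (u v : ℕ → Fin N → ℝ)
    (hu : ∀ k, (1 / Δt) • (u (k + 1) - u k) + τ • B.mulVec (u (k + 1) - u k)
        = f - A.mulVec (u k))
    (hv : ∀ k, (1 / Δt) • (v (k + 1) - v k) + A.mulVec (v (k + 1)) = f)
    (h0 : u 0 = v 0)
    (hM : mopNorm (1 - Δt • (((1 : Matrix (Fin N) (Fin N) ℝ) + (τ * Δt) • B)⁻¹ * A)) < 1) :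
    ∃ γ : ℝ, 0 ≤ γ ∧ γ < 1 ∧
      ∀ k : ℕ, vnorm (u k - v k) ≤
        Δt ^ 2 * mopNorm (τ • B - A) * (1 / (1 - γ)) * vnorm (f - A.mulVec (v 0)) := by
  set P : Matrix (Fin N) (Fin N) ℝ := 1 + (τ * Δt) • B with hP
  set M := 1 - Δt • (P⁻¹ * A) with hMd
  have hτΔ : 0 < τ * Δt := mul_pos hτ hΔt
  have hPpd : P.PosDef := Matrix.PosDef.one.add (hB.smul hτΔ)
  have hPdet : IsUnit P.det := (Matrix.isUnit_iff_isUnit_det P).1 hPpd.isUnit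
  have hne : Δt ≠ 0 := hΔt.ne'
  have hPv : ∀ x, P *ᵥ x = x + (τ * Δt) • B *ᵥ x := by
    intro x
    simp [hP, add_mulVec, smul_mulVec]
  have hinv : ∀ x, vnorm (P⁻¹ *ᵥ x) ≤ vnorm x := by
    intro x
    have h := vnorm_le_add B hB (τ * Δt) hτΔ.le (P⁻¹ *ᵥ x)
    rwa [← hPv, mulVec_mulVec, Matrix.mul_nonsing_inv _ hPdet, one_mulVec] at h
  have hd : ∀ k, v (k + 1) - v k = Δt • (f - A *ᵥ v (k + 1)) := by
    intro k
    rw [← hv k]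
    simp [smul_smul, hne]
  have hdu : ∀ k, P *ᵥ (u (k + 1) - u k) = Δt • (f - A *ᵥ u k) := by
    intro k
    rw [← hu k, hPv, smul_add, smul_smul, smul_smul, mul_one_div_cancel hne, one_smul,
      mul_comm τ Δt]
  have hr : ∀ k, vnorm (f - A *ᵥ v k) ≤ vnorm (f - A *ᵥ v 0) := by
    intro k
    induction k with
    | zero => exact le_rfl
    | succ k ih =>
      refine le_trans ?_ ih
      have h := vnorm_le_add A hA Δt hΔt.le (f - A *ᵥ v (k + 1))
      have e : f - A *ᵥ v (k + 1) + Δt • A *ᵥ (f - A *ᵥ v (k + 1)) = f - A *ᵥ v k := by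
        rw [← mulVec_smul, ← hd k, mulVec_sub]
        abel
      rwa [e] at h
  have hstep : ∀ k, u (k + 1) - v (k + 1) = M *ᵥ (u k - v k)
      - (Δt ^ 2) • P⁻¹ *ᵥ ((τ • B - A) *ᵥ (f - A *ᵥ v (k + 1))) := by
    intro k
    have h1 : P *ᵥ (u (k + 1) - v (k + 1)) = P *ᵥ (u k - v k) - Δt • A *ᵥ (u k - v k)
        - (Δt ^ 2) • ((τ • B - A) *ᵥ (f - A *ᵥ v (k + 1))) := by
      have e1 : u (k + 1) - v (k + 1)
          = (u (k + 1) - u k) + (u k - v k) - (v (k + 1) - v k) := by abel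
      have e2 : P *ᵥ (v (k + 1) - v k) = Δt • (f - A *ᵥ v k)
          + (Δt ^ 2) • ((τ • B - A) *ᵥ (f - A *ᵥ v (k + 1))) := by
        have e3 : f - A *ᵥ v k = (f - A *ᵥ v (k + 1)) + A *ᵥ (v (k + 1) - v k) := by
          rw [mulVec_sub]; abel
        rw [e3, hPv, hd k]
        simp only [sub_mulVec, smul_mulVec, mulVec_smul]
        module
      rw [e1, mulVec_sub, mulVec_add, hdu, e2, mulVec_sub A]
      module
    have h2 := congrArg (fun x => P⁻¹ *ᵥ x) h1
    simp only [mulVec_sub P⁻¹, mulVec_smul, mulVec_mulVec _ P⁻¹ P, Matrix.nonsing_inv_mul _ hPdet,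
      one_mulVec] at h2
    rw [h2, hMd, sub_mulVec 1, one_mulVec, smul_mulVec, mulVec_mulVec _ P⁻¹ A]
  have hm0 : 0 ≤ mopNorm M := norm_nonneg _
  have hT0 : 0 ≤ mopNorm (τ • B - A) := norm_nonneg _
  refine ⟨mopNorm M, hm0, hM, ?_⟩
  have h1m : 0 < 1 - mopNorm M := by linarith
  have hR0 : 0 ≤ vnorm (f - A *ᵥ v 0) := Real.sqrt_nonneg _
  intro k
  induction k with
  | zero =>
    rw [h0, sub_self]
    have : vnorm (0 : Fin N → ℝ) = 0 := by simp [vnorm]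
    rw [this]
    positivity
  | succ k ih =>
    have a1 := vnorm_sub_le (M *ᵥ (u k - v k))
      ((Δt ^ 2) • P⁻¹ *ᵥ ((τ • B - A) *ᵥ (f - A *ᵥ v (k + 1))))
    rw [← hstep k, vnorm_smul _ (sq_nonneg _)] at a1
    have a2 := (vnorm_mulVec_le M (u k - v k)).trans (mul_le_mul_of_nonneg_left ih hm0)
    have a3 := (hinv _).trans ((vnorm_mulVec_le (τ • B - A) (f - A *ᵥ v (k + 1))).trans
      (mul_le_mul_of_nonneg_left (hr (k + 1)) hT0))
    have a4 := mul_le_mul_of_nonneg_left a3 (sq_nonneg Δt)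
    refine a1.trans ((add_le_add a2 a4).trans (le_of_eq ?_))
    field_simp
    ring
end

section
/- Assume that for every i ∈ {1,…,d}, 1/Δt + τ β_i − (1/4) Σ_{j=1}^{d} (‖A_{i,j}‖ + ‖A_{j,i}‖) > 0. Then any U, U' satisfying the block RSS step (U' − U)/Δt + τ B(U' − U) = −A U obey ⟨A U', U'⟩ ≤ ⟨A U, U⟩. -/
open Matrix

/-- The operator norm of a (possibly rectangular) real matrix, induced by the
Euclidean norms. -/
noncomputable def mopNorm' {m n : Type*} [Fintype m] [Fintype n] [DecidableEq n]
    (C : Matrix m n ℝ) : ℝ :=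
  ‖LinearMap.toContinuousLinearMap (Matrix.toEuclideanLin C)‖

theorem mop_bound_aux {m n : Type*} [Fintype m] [Fintype n] [DecidableEq n]
    (C : Matrix m n ℝ) (x : m → ℝ) (y : n → ℝ) :
    ∑ a, ∑ b, C a b * y b * x a ≤
      mopNorm' C * ((∑ a, x a ^ 2 + ∑ b, y b ^ 2) / 2) := by
  have h1 : ∑ a, ∑ b, C a b * y b * x a =
      inner ℝ (WithLp.toLp 2 x) (Matrix.toEuclideanLin C (WithLp.toLp 2 y)) := by
    simp [PiLp.inner_apply, Matrix.toLpLin_apply, Matrix.mulVec, dotProduct, Finset.sum_mul]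
  have h2 : ‖Matrix.toEuclideanLin C (WithLp.toLp 2 y)‖ ≤ mopNorm' C * ‖WithLp.toLp 2 y‖ :=
    (LinearMap.toContinuousLinearMap (Matrix.toEuclideanLin C)).le_opNorm (WithLp.toLp 2 y)
  have h0 : 0 ≤ mopNorm' C := norm_nonneg _
  have hx : ∑ a, x a ^ 2 = ‖WithLp.toLp 2 x‖ ^ 2 := by simp [EuclideanSpace.norm_sq_eq]
  have hy : ∑ a, y a ^ 2 = ‖WithLp.toLp 2 y‖ ^ 2 := by simp [EuclideanSpace.norm_sq_eq]
  rw [h1, hx, hy]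
  have h3 := real_inner_le_norm (WithLp.toLp 2 x) (Matrix.toEuclideanLin C (WithLp.toLp 2 y))
  have h4 := mul_le_mul_of_nonneg_left h2 (norm_nonneg (WithLp.toLp 2 x))
  have h5 := mul_nonneg h0 (sq_nonneg (‖WithLp.toLp 2 x‖ - ‖WithLp.toLp 2 y‖))
  nlinarith

/-- block RSS stability. Vectors of `ℝ^N` are decomposed into `d`
blocks (`N = n₁ + ⋯ + n_d`, modelled by the sigma type `Σ i, Fin (n i)`), `A` is
symmetric with blocks `A_{i,j}`, and `B` is the block diagonal matrix with
blocks `β_i · Id`. If for every `i`,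
`1/Δt + τ β_i − (1/4) Σ_j (‖A_{i,j}‖ + ‖A_{j,i}‖) > 0`,
then the block RSS step `(U' − U)/Δt + τ B (U' − U) = −A U` satisfies
`⟨A U', U'⟩ ≤ ⟨A U, U⟩`. -/
theorem block_rss_energy_stability
    {d : ℕ} (hd : 0 < d) (n : Fin d → ℕ) (hn : ∀ i, 0 < n i)
    (A : Matrix (Σ i, Fin (n i)) (Σ i, Fin (n i)) ℝ) (hA : A.IsSymm)
    (β : Fin d → ℝ) (hβ : ∀ i, 0 ≤ β i)
    (τ Δt : ℝ) (hτ : 0 < τ) (hΔt : 0 < Δt)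
    (hcond : ∀ i : Fin d,
      0 < 1 / Δt + τ * β i -
        (1 / 4) * ∑ j : Fin d,
          (mopNorm' (A.submatrix (Sigma.mk i) (Sigma.mk j)) +
            mopNorm' (A.submatrix (Sigma.mk j) (Sigma.mk i))))
    (U U' : (Σ i, Fin (n i)) → ℝ)
    (hstep : (1 / Δt) • (U' - U) +
        τ • (Matrix.blockDiagonal'
          (fun i => (β i) • (1 : Matrix (Fin (n i)) (Fin (n i)) ℝ))).mulVec (U' - U)
        = -(A.mulVec U)) :
    A.mulVec U' ⬝ᵥ U' ≤ A.mulVec U ⬝ᵥ U := by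
  obtain ⟨V, rfl⟩ : ∃ V, U' = U + V := ⟨U' - U, by simp⟩
  rw [add_sub_cancel_left] at hstep
  have hB : ∀ i a, (A.mulVec U) ⟨i, a⟩ = -((1 / Δt + τ * β i) * V ⟨i, a⟩) := by
    intro i a
    have h := congrFun hstep ⟨i, a⟩
    have hd : (Matrix.blockDiagonal'
          (fun i => (β i) • (1 : Matrix (Fin (n i)) (Fin (n i)) ℝ))) =
          Matrix.diagonal (fun p => β p.1) := by
      have : (fun i => (β i) • (1 : Matrix (Fin (n i)) (Fin (n i)) ℝ)) =
          fun i => Matrix.diagonal (fun _ => β i) := by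
        funext i
        rw [Matrix.smul_one_eq_diagonal]
      rw [this, Matrix.blockDiagonal'_diagonal]
    rw [hd] at h
    simp only [Pi.add_apply, Pi.smul_apply, Pi.neg_apply, smul_eq_mul,
      Matrix.mulVec_diagonal] at h
    linarith
  have hsymm : A.mulVec V ⬝ᵥ U = A.mulVec U ⬝ᵥ V := by
    rw [dotProduct_comm, Matrix.dotProduct_mulVec, ← Matrix.mulVec_transpose, hA.eq]
  have hlin : A.mulVec U ⬝ᵥ V = -∑ i, (1 / Δt + τ * β i) * ∑ a, V ⟨i, a⟩ ^ 2 := by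
    simp only [dotProduct, Fintype.sum_sigma, hB, Finset.mul_sum, ← Finset.sum_neg_distrib]
    refine Finset.sum_congr rfl fun i _ => Finset.sum_congr rfl fun a _ => ?_
    ring
  have hquad : A.mulVec V ⬝ᵥ V = ∑ i, ∑ j, ∑ a, ∑ b,
      (A.submatrix (Sigma.mk i) (Sigma.mk j)) a b * V ⟨j, b⟩ * V ⟨i, a⟩ := by
    simp only [dotProduct, Matrix.mulVec, Fintype.sum_sigma, Finset.sum_mul, Matrix.submatrix_apply]
    exact Finset.sum_congr rfl fun i _ => Finset.sum_comm
  have hle : A.mulVec V ⬝ᵥ V ≤ ∑ i, ∑ j, mopNorm' (A.submatrix (Sigma.mk i) (Sigma.mk j)) *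
      ((∑ a, V ⟨i, a⟩ ^ 2 + ∑ b, V ⟨j, b⟩ ^ 2) / 2) := by
    rw [hquad]
    exact Finset.sum_le_sum fun i _ => Finset.sum_le_sum fun j _ =>
      mop_bound_aux _ (fun a => V ⟨i, a⟩) (fun b => V ⟨j, b⟩)
  generalize hM : (fun i j => mopNorm' (A.submatrix (Sigma.mk i) (Sigma.mk j))) = M at *
  have hM' : ∀ i j, mopNorm' (A.submatrix (Sigma.mk i) (Sigma.mk j)) = M i j := by
    intro i j
    rw [← hM]
  simp only [hM'] at hle hcond
  obtain ⟨s, hs⟩ : ∃ s : Fin d → ℝ, ∀ i, ∑ a, V ⟨i, a⟩ ^ 2 = s i := ⟨_, fun _ => rfl⟩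
  have hs0 : ∀ i, 0 ≤ s i := fun i => by
    rw [← hs]
    positivity
  simp only [hs] at hle hlin
  have hswap : ∑ i, ∑ j, M i j * ((s i + s j) / 2) =
      ∑ i, (1 / 2) * (∑ j, (M i j + M j i)) * s i := by
    have e1 : ∑ i, ∑ j, M i j * ((s i + s j) / 2) =
        ∑ i, ∑ j, M i j * s i / 2 + ∑ i, ∑ j, M i j * s j / 2 := by
      simp only [← Finset.sum_add_distrib]
      refine Finset.sum_congr rfl fun i _ => Finset.sum_congr rfl fun a _ => ?_
      ring
    rw [e1, Finset.sum_comm (f := fun i j => M i j * s j / 2)]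
    simp only [← Finset.sum_add_distrib, Finset.mul_sum, Finset.sum_mul]
    refine Finset.sum_congr rfl fun i _ => Finset.sum_congr rfl fun a _ => ?_
    ring
  have hfin : ∑ i, (1 / 2) * (∑ j, (M i j + M j i)) * s i ≤
      2 * ∑ i, (1 / Δt + τ * β i) * s i := by
    rw [Finset.mul_sum]
    refine Finset.sum_le_sum fun i _ => ?_
    have := mul_nonneg (hcond i).le (hs0 i)
    linarith
  rw [Matrix.mulVec_add, add_dotProduct, dotProduct_add, dotProduct_add, hsymm]
  linarith
end

section
/- Let Δt > 0, β̃ ≥ 0 and m a real number with m ≠ 0, and set g = 1 − m²Δt/(1 + β̃Δt), the amplification factor of the stabilized Fourier scheme û^(k+1) = g·û^(k). Then |g| < 1 if and only if (m² − 2β̃)·Δt < 2. In particular, if β̃ ≥ m²/2 then |g| < 1 for every Δt > 0. -/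
/-- for the stabilized Fourier scheme with amplification factor
`g = 1 − m²Δt/(1 + β̃Δt)` (with `Δt > 0`, `β̃ ≥ 0`, `m ≠ 0`), one has
`|g| < 1 ↔ (m² − 2β̃)Δt < 2`; in particular, if `β̃ ≥ m²/2` then `|g| < 1`
for every time step `Δt > 0`. -/
theorem fourier_mode_stability
    (Δt β' m : ℝ) (hΔt : 0 < Δt) (hβ' : 0 ≤ β') (hm : m ≠ 0) :
    (|1 - m ^ 2 * Δt / (1 + β' * Δt)| < 1 ↔ (m ^ 2 - 2 * β') * Δt < 2) ∧
      (β' ≥ m ^ 2 / 2 →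
        ∀ Δt' : ℝ, 0 < Δt' → |1 - m ^ 2 * Δt' / (1 + β' * Δt')| < 1) := by
  have key : ∀ t : ℝ, 0 < t →
      (|1 - m ^ 2 * t / (1 + β' * t)| < 1 ↔ (m ^ 2 - 2 * β') * t < 2) := by
    intro t ht
    have hd : 0 < 1 + β' * t := by positivity
    have hq : 0 < m ^ 2 * t / (1 + β' * t) := by positivity
    have h2 : m ^ 2 * t / (1 + β' * t) < 2 ↔ m ^ 2 * t < 2 * (1 + β' * t) := div_lt_iff₀ hd
    rw [abs_lt]
    constructor
    · rintro ⟨h, _⟩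
      have := h2.1 (by linarith)
      linarith
    · intro h
      have := h2.2 (by linarith)
      constructor <;> linarith
  refine ⟨key Δt hΔt, fun hb t ht => (key t ht).2 ?_⟩
  have : (m ^ 2 - 2 * β') * t ≤ 0 := mul_nonpos_of_nonpos_of_nonneg (by linarith) ht.le
  linarith
end

section
/- Let u, u' ∈ ℝ^N satisfy the nonlinear RSS step (u' − u)/Δt + τ B(u' − u) + (1/ε²) f(u) = −A u for some Δt > 0. Then (1/Δt − L/(2ε²))·‖u' − u‖² + (τ/β − 1/2)·⟨A(u' − u), u' − u⟩ + E(u') − E(u) ≤ 0. -/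
open Matrix

theorem taylor_aux (f F : ℝ → ℝ) (L : ℝ)
    (hf : ∀ x, DifferentiableAt ℝ f x) (hfL : ∀ x, |deriv f x| ≤ L)
    (hF : ∀ x, HasDerivAt F (f x) x) (x d : ℝ) :
    F (x + d) ≤ F x + f x * d + L / 2 * (d * d) := by
  have hlip : ∀ y, |f y - f x| ≤ L * |y - x| := by
    intro y
    have := Convex.norm_image_sub_le_of_norm_deriv_le (f := f) (s := Set.univ) (C := L)
      (fun x _ => hf x) (fun x _ => hfL x) convex_univ (Set.mem_univ x) (Set.mem_univ y)
    simpa using this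
  have hd : ∀ t : ℝ, HasDerivAt (fun t : ℝ => F (x + t * d) - f x * (t * d) - L / 2 * (d * d) * t ^ 2)
      (f (x + t * d) * d - f x * d - L * (d * d) * t) t := by
    intro t
    have h0 : HasDerivAt (fun t : ℝ => t * d) d t := by
      simpa using (hasDerivAt_id t).mul_const d
    have h1 : HasDerivAt (fun t : ℝ => F (x + t * d)) (f (x + t * d) * d) t :=
      (hF (x + t * d)).comp t (h0.const_add x)
    have h2 := (h1.sub (h0.const_mul (f x))).sub ((hasDerivAt_pow 2 t).const_mul (L / 2 * (d * d)))
    refine h2.congr_deriv ?_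
    norm_num
    ring
  have hanti := antitoneOn_of_deriv_nonpos (convex_Icc (0 : ℝ) 1)
    (fun t _ => (hd t).continuousAt.continuousWithinAt)
    (fun t _ => (hd t).differentiableAt.differentiableWithinAt)
    (by
      intro t ht
      rw [interior_Icc] at ht
      rw [(hd t).deriv]
      have h := hlip (x + t * d)
      have h3 : (f (x + t * d) - f x) * d ≤ L * |t * d| * |d| := by
        calc _ ≤ |(f (x + t * d) - f x) * d| := le_abs_self _
          _ = |f (x + t * d) - f x| * |d| := abs_mul _ _
          _ ≤ _ := by
            gcongr
            simpa using h
      rw [abs_mul, abs_of_pos ht.1] at h3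
      have h4 : L * (t * |d|) * |d| = L * (d * d) * t := by
        rw [← abs_mul_abs_self d]; ring
      linarith)
  have := hanti (Set.left_mem_Icc.2 zero_le_one) (Set.right_mem_Icc.2 zero_le_one) zero_le_one
  norm_num at this
  linarith

/-- the fundamental energy inequality for one nonlinear RSS step
`(u' − u)/Δt + τ B (u' − u) + (1/ε²) f(u) = −A u`:
`(1/Δt − L/(2ε²))‖u' − u‖² + (τ/β − 1/2)⟨A(u'−u), u'−u⟩ + E(u') − E(u) ≤ 0`,
where `E(u) = (1/2)⟨Au,u⟩ + (1/ε²) Σᵢ F(uᵢ)`. -/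
theorem nonlinear_rss_energy_inequality
    {N : ℕ} (hN : 0 < N) (A B : Matrix (Fin N) (Fin N) ℝ)
    (hA : A.PosDef) (hB : B.PosDef)
    (α β : ℝ) (hα : 0 < α) (hαβ : α ≤ β)
    (hlow : ∀ u : Fin N → ℝ, α * (B.mulVec u ⬝ᵥ u) ≤ A.mulVec u ⬝ᵥ u)
    (hup : ∀ u : Fin N → ℝ, A.mulVec u ⬝ᵥ u ≤ β * (B.mulVec u ⬝ᵥ u))
    (ε L τ : ℝ) (hε : 0 < ε) (hL : 0 ≤ L) (hτ : 0 < τ)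
    (f F : ℝ → ℝ)
    (hf : ∀ x, DifferentiableAt ℝ f x) (hfL : ∀ x, |deriv f x| ≤ L)
    (hF : ∀ x, HasDerivAt F (f x) x) (hF0 : F 0 = 0)
    (Δt : ℝ) (hΔt : 0 < Δt)
    (u u' : Fin N → ℝ)
    (hstep : (1 / Δt) • (u' - u) + τ • B.mulVec (u' - u)
        + (1 / ε ^ 2) • (fun i => f (u i)) = -(A.mulVec u)) :
    (1 / Δt - L / (2 * ε ^ 2)) * ((u' - u) ⬝ᵥ (u' - u))
      + (τ / β - 1 / 2) * (A.mulVec (u' - u) ⬝ᵥ (u' - u))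
      + ((1 / 2) * (A.mulVec u' ⬝ᵥ u') + (1 / ε ^ 2) * ∑ i, F (u' i))
      - ((1 / 2) * (A.mulVec u ⬝ᵥ u) + (1 / ε ^ 2) * ∑ i, F (u i)) ≤ 0 := by
  obtain ⟨d, rfl⟩ : ∃ d, u' = u + d := ⟨u' - u, by simp⟩
  simp only [add_sub_cancel_left] at *
  have hβ : 0 < β := lt_of_lt_of_le hα hαβ
  have hdot := congrArg (fun v => v ⬝ᵥ d) hstep
  simp only [add_dotProduct, smul_dotProduct, neg_dotProduct, smul_eq_mul] at hdot
  have hsym : A.mulVec d ⬝ᵥ u = A.mulVec u ⬝ᵥ d := by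
    have hT : Aᵀ = A := by simpa using hA.isHermitian.eq
    rw [dotProduct_comm, dotProduct_mulVec, ← mulVec_transpose, hT]
  have hB' : τ / β * (A.mulVec d ⬝ᵥ d) ≤ τ * (B.mulVec d ⬝ᵥ d) := by
    calc _ ≤ τ / β * (β * (B.mulVec d ⬝ᵥ d)) := by
          gcongr
          exact hup d
      _ = _ := by field_simp
  have hsum : ∑ i, F ((u + d) i) ≤ ∑ i, F (u i) + (fun i => f (u i)) ⬝ᵥ d + L / 2 * (d ⬝ᵥ d) := by
    simp only [dotProduct, Finset.mul_sum, ← Finset.sum_add_distrib]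
    exact Finset.sum_le_sum fun i _ => taylor_aux f F L hf hfL hF (u i) (d i)
  have hsum' := mul_le_mul_of_nonneg_left hsum (by positivity : 0 ≤ 1 / ε ^ 2)
  have hLe : L / (2 * ε ^ 2) = 1 / ε ^ 2 * (L / 2) := by field_simp
  rw [hLe, mulVec_add, add_dotProduct, dotProduct_add, dotProduct_add, hsym]
  linarith
end

section
/- Suppose τ ≥ β/2 and (τ/β − 1/2)·λ_min − L/(2ε²) ≥ 0, where λ_min is the smallest eigenvalue of A. Then for every Δt > 0, any u, u' ∈ ℝ^N satisfying the nonlinear RSS step (u' − u)/Δt + τ B(u' − u) + (1/ε²) f(u) = −A u obey E(u') ≤ E(u); that is, the scheme is unconditionally energy stable. -/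
open Matrix

lemma aux_taylor (f F : ℝ → ℝ) (L : ℝ)
    (hf : ∀ x, DifferentiableAt ℝ f x) (hfL : ∀ x, |deriv f x| ≤ L)
    (hF : ∀ x, HasDerivAt F (f x) x) (a b : ℝ) :
    F b - F a ≤ f a * (b - a) + L / 2 * (b - a) ^ 2 := by
  have hg : ∀ x, HasDerivAt (fun x => L * x - f x) (L - deriv f x) x := fun x => by
    have h := HasDerivAt.fun_sub ((hasDerivAt_id' x).const_mul L) (hf x).hasDerivAt
    rwa [mul_one] at h
  have hmono : Monotone (fun x => L * x - f x) := by
    apply monotone_of_deriv_nonneg (fun x => (hg x).differentiableAt)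
    intro x
    rw [(hg x).deriv]
    linarith [le_abs_self (deriv f x), hfL x]
  have hh : ∀ x, HasDerivAt (fun x => L / 2 * x ^ 2 - F x) (L * x - f x) x := fun x => by
    have h := HasDerivAt.fun_sub ((hasDerivAt_pow 2 x).const_mul (L / 2)) (hF x)
    refine h.congr_deriv ?_
    norm_num
    ring
  rcases lt_trichotomy a b with h | h | h
  · obtain ⟨c, hc, he⟩ := exists_hasDerivAt_eq_slope (fun x => L / 2 * x ^ 2 - F x) _ h
      (fun x _ => (hh x).continuousAt.continuousWithinAt) (fun x _ => hh x)
    have h1 := hmono hc.1.le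
    have h2 : 0 < b - a := by linarith
    rw [eq_div_iff h2.ne'] at he
    have h3 := mul_le_mul_of_nonneg_right h1 h2.le
    simp only at h3 he
    nlinarith
  · subst h; simp
  · obtain ⟨c, hc, he⟩ := exists_hasDerivAt_eq_slope (fun x => L / 2 * x ^ 2 - F x) _ h
      (fun x _ => (hh x).continuousAt.continuousWithinAt) (fun x _ => hh x)
    have h1 := hmono hc.2.le
    have h2 : 0 < a - b := by linarith
    rw [eq_div_iff h2.ne'] at he
    have h3 := mul_le_mul_of_nonneg_right h1 h2.le
    simp only at h3 he
    nlinarith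

lemma aux_sym {N : ℕ} {A : Matrix (Fin N) (Fin N) ℝ} (hA : A.IsHermitian)
    (x y : Fin N → ℝ) : A.mulVec x ⬝ᵥ y = A.mulVec y ⬝ᵥ x := by
  have hT : Aᵀ = A := by simpa [Matrix.IsHermitian, conjTranspose_eq_transpose_of_trivial] using hA
  rw [dotProduct_comm, dotProduct_mulVec, ← mulVec_transpose, hT]

lemma aux_rayleigh {N : ℕ} {A : Matrix (Fin N) (Fin N) ℝ} (hA : A.IsHermitian)
    (d : Fin N → ℝ) : (⨅ i, hA.eigenvalues i) * (d ⬝ᵥ d) ≤ A.mulVec d ⬝ᵥ d := by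
  have key : ∀ x y : Fin N → ℝ, x ⬝ᵥ y =
      ∑ i, (x ⬝ᵥ (hA.eigenvectorBasis i).ofLp) * ((hA.eigenvectorBasis i).ofLp ⬝ᵥ y) := by
    intro x y
    have := hA.eigenvectorBasis.sum_inner_mul_inner (WithLp.toLp 2 x) (WithLp.toLp 2 y)
    simp only [EuclideanSpace.inner_eq_star_dotProduct, star_trivial] at this
    rw [dotProduct_comm x y, ← this]
    refine Finset.sum_congr rfl fun i _ => ?_
    rw [dotProduct_comm x, dotProduct_comm y]
  rw [key (A.mulVec d) d, key d d, Finset.mul_sum]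
  refine Finset.sum_le_sum fun i _ => ?_
  rw [aux_sym hA, hA.mulVec_eigenvectorBasis, smul_dotProduct, smul_eq_mul,
    dotProduct_comm d, mul_assoc]
  exact mul_le_mul_of_nonneg_right (ciInf_le (Set.finite_range _).bddBelow i)
    (mul_self_nonneg _)

/-- if `τ ≥ β/2` and `(τ/β − 1/2)·λ_min − L/(2ε²) ≥ 0` (with
`λ_min` the smallest eigenvalue of `A`), then for every `Δt > 0` the nonlinear
RSS step `(u' − u)/Δt + τ B (u' − u) + (1/ε²) f(u) = −A u` is energy
decreasing: `E(u') ≤ E(u)`, where `E(u) = (1/2)⟨Au,u⟩ + (1/ε²) Σᵢ F(uᵢ)`. -/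
theorem nonlinear_rss_unconditional_stability
    {N : ℕ} (hN : 0 < N) (A B : Matrix (Fin N) (Fin N) ℝ)
    (hA : A.PosDef) (hB : B.PosDef)
    (α β : ℝ) (hα : 0 < α) (hαβ : α ≤ β)
    (hlow : ∀ u : Fin N → ℝ, α * (B.mulVec u ⬝ᵥ u) ≤ A.mulVec u ⬝ᵥ u)
    (hup : ∀ u : Fin N → ℝ, A.mulVec u ⬝ᵥ u ≤ β * (B.mulVec u ⬝ᵥ u))
    (ε L τ : ℝ) (hε : 0 < ε) (hL : 0 ≤ L) (hτ : 0 < τ)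
    (f F : ℝ → ℝ)
    (hf : ∀ x, DifferentiableAt ℝ f x) (hfL : ∀ x, |deriv f x| ≤ L)
    (hF : ∀ x, HasDerivAt F (f x) x) (hF0 : F 0 = 0)
    (hτβ : β / 2 ≤ τ)
    (hcond : 0 ≤ (τ / β - 1 / 2) * (⨅ i, hA.1.eigenvalues i) - L / (2 * ε ^ 2)) :
    ∀ Δt : ℝ, 0 < Δt →
      ∀ u u' : Fin N → ℝ,
        (1 / Δt) • (u' - u) + τ • B.mulVec (u' - u)
            + (1 / ε ^ 2) • (fun i => f (u i)) = -(A.mulVec u) →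
        (1 / 2) * (A.mulVec u' ⬝ᵥ u') + (1 / ε ^ 2) * ∑ i, F (u' i) ≤
          (1 / 2) * (A.mulVec u ⬝ᵥ u) + (1 / ε ^ 2) * ∑ i, F (u i) := by
  intro Δt hΔ u u' h
  obtain ⟨d, rfl⟩ : ∃ d, u' = u + d := ⟨u' - u, by simp⟩
  rw [add_sub_cancel_left] at h
  have h1 := congrArg (fun v => v ⬝ᵥ d) h
  simp only [add_dotProduct, smul_dotProduct, neg_dotProduct, smul_eq_mul] at h1
  have hsum : ∑ i, F ((u + d) i) - ∑ i, F (u i)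
      ≤ (fun i => f (u i)) ⬝ᵥ d + L / 2 * (d ⬝ᵥ d) := by
    simp only [dotProduct]
    rw [← Finset.sum_sub_distrib, Finset.mul_sum, ← Finset.sum_add_distrib]
    refine Finset.sum_le_sum fun i _ => ?_
    have := aux_taylor f F L hf hfL hF (u i) ((u + d) i)
    simp only [Pi.add_apply, add_sub_cancel_left] at this ⊢
    linarith
  have hE : A.mulVec (u + d) ⬝ᵥ (u + d)
      = A.mulVec u ⬝ᵥ u + 2 * (A.mulVec u ⬝ᵥ d) + A.mulVec d ⬝ᵥ d := by
    rw [mulVec_add, add_dotProduct, dotProduct_add, dotProduct_add, aux_sym hA.1 d u]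
    ring
  have hβ : 0 < β := by linarith
  have hdd : 0 ≤ d ⬝ᵥ d := Finset.sum_nonneg fun i _ => mul_self_nonneg _
  have hR := aux_rayleigh hA.1 d
  have hc : 0 ≤ τ / β - 1 / 2 := by
    rw [sub_nonneg, le_div_iff₀ hβ]; linarith
  have hB1 : τ / β * (A.mulVec d ⬝ᵥ d) ≤ τ * (B.mulVec d ⬝ᵥ d) := by
    have := mul_le_mul_of_nonneg_left (hup d) (div_pos hτ hβ).le
    rwa [← mul_assoc, div_mul_cancel₀ _ hβ.ne'] at this
  have h2 := mul_le_mul_of_nonneg_left hR hc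
  have h3 := mul_nonneg hcond hdd
  have h4 : 0 ≤ 1 / Δt * (d ⬝ᵥ d) := by positivity
  have h5 := mul_le_mul_of_nonneg_left hsum (show 0 ≤ 1 / ε ^ 2 by positivity)
  have h6 : L / (2 * ε ^ 2) = 1 / ε ^ 2 * (L / 2) := by field_simp
  rw [h6] at h3
  rw [hE]
  linarith
end

section
/- Let μ = a + ib (a, b ∈ ℝ) be a complex eigenvalue of M = I − Δt (I + τΔt B)⁻¹ A with eigenvector v = v₁ + i·v₂, where v₁, v₂ ∈ ℝ^N are not both zero. Set N₀ = ‖v₁‖² + ‖v₂‖² + τΔt·(⟨Bv₁,v₁⟩ + ⟨Bv₂,v₂⟩). Then (1 − a)·N₀ = Δt·(⟨Av₁,v₁⟩ + ⟨Av₂,v₂⟩) and b·N₀ = Δt·⟨(A − Aᵀ)v₁, v₂⟩. -/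
open Matrix

/-- real/imaginary part identities for a complex eigenvalue
`μ = a + ib` of the RSS iteration matrix `M = I − Δt (I + τΔt B)⁻¹ A` with
eigenvector `v = v₁ + i v₂`. With
`N₀ = ‖v₁‖² + ‖v₂‖² + τΔt(⟨Bv₁,v₁⟩ + ⟨Bv₂,v₂⟩)`, one has
`(1 − a)·N₀ = Δt·(⟨Av₁,v₁⟩ + ⟨Av₂,v₂⟩)` and `b·N₀ = Δt·⟨(A − Aᵀ)v₁, v₂⟩`. -/
theorem rss_eigenvalue_identities
    {N : ℕ} (hN : 0 < N) (A B : Matrix (Fin N) (Fin N) ℝ)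
    (hB : B.PosDef)
    (τ Δt : ℝ) (hτ : 0 < τ) (hΔt : 0 < Δt)
    (a b : ℝ) (v₁ v₂ : Fin N → ℝ) (hv : ¬(v₁ = 0 ∧ v₂ = 0))
    (heig : (((1 : Matrix (Fin N) (Fin N) ℝ) -
        Δt • (((1 : Matrix (Fin N) (Fin N) ℝ) + (τ * Δt) • B)⁻¹ * A)).map
          (Complex.ofReal ·)).mulVec
        (fun k => (v₁ k : ℂ) + (v₂ k : ℂ) * Complex.I) =
      ((a : ℂ) + (b : ℂ) * Complex.I) •
        (fun k => (v₁ k : ℂ) + (v₂ k : ℂ) * Complex.I)) :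
    (1 - a) * (v₁ ⬝ᵥ v₁ + v₂ ⬝ᵥ v₂ +
        τ * Δt * (B.mulVec v₁ ⬝ᵥ v₁ + B.mulVec v₂ ⬝ᵥ v₂)) =
      Δt * (A.mulVec v₁ ⬝ᵥ v₁ + A.mulVec v₂ ⬝ᵥ v₂) ∧
    b * (v₁ ⬝ᵥ v₁ + v₂ ⬝ᵥ v₂ +
        τ * Δt * (B.mulVec v₁ ⬝ᵥ v₁ + B.mulVec v₂ ⬝ᵥ v₂)) =
      Δt * ((A - Aᵀ).mulVec v₁ ⬝ᵥ v₂) := by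
  set S : Matrix (Fin N) (Fin N) ℝ := 1 + (τ * Δt) • B with hS
  have hSpd : S.PosDef := Matrix.PosDef.one.add (hB.smul (mul_pos hτ hΔt))
  have hSu : IsUnit S.det := hSpd.det_pos.ne'.isUnit
  set M : Matrix (Fin N) (Fin N) ℝ := 1 - Δt • (S⁻¹ * A) with hM
  have h1 : M.mulVec v₁ = a • v₁ - b • v₂ := by
    funext k
    have h := congrArg Complex.re (congrFun heig k)
    simpa [Matrix.mulVec, dotProduct] using h
  have h2 : M.mulVec v₂ = a • v₂ + b • v₁ := by
    funext k
    have h := congrArg Complex.im (congrFun heig k)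
    simpa [Matrix.mulVec, dotProduct] using h
  have hSM : Δt • A = S - S * M := by
    rw [hM, mul_sub, mul_one, Matrix.mul_smul, Matrix.mul_nonsing_inv_cancel_left _ _ hSu]
    abel
  have e1 : Δt • A.mulVec v₁ = S.mulVec v₁ - S.mulVec (a • v₁ - b • v₂) := by
    rw [← h1, Matrix.mulVec_mulVec, ← Matrix.sub_mulVec, ← hSM, Matrix.smul_mulVec]
  have e2 : Δt • A.mulVec v₂ = S.mulVec v₂ - S.mulVec (a • v₂ + b • v₁) := by
    rw [← h2, Matrix.mulVec_mulVec, ← Matrix.sub_mulVec, ← hSM, Matrix.smul_mulVec]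
  have hBT : Bᵀ = B := by
    have h := hB.isHermitian
    rwa [Matrix.IsHermitian, Matrix.conjTranspose_eq_transpose_of_trivial] at h
  have hsym : B.mulVec v₂ ⬝ᵥ v₁ = B.mulVec v₁ ⬝ᵥ v₂ := by
    rw [dotProduct_comm, Matrix.dotProduct_mulVec, ← Matrix.mulVec_transpose, hBT]
  have hAT : Aᵀ.mulVec v₁ ⬝ᵥ v₂ = A.mulVec v₂ ⬝ᵥ v₁ := by
    rw [Matrix.mulVec_transpose, ← Matrix.dotProduct_mulVec, dotProduct_comm]
  have hc : v₂ ⬝ᵥ v₁ = v₁ ⬝ᵥ v₂ := dotProduct_comm _ _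
  have f11 := congrArg (· ⬝ᵥ v₁) e1
  have f12 := congrArg (· ⬝ᵥ v₂) e1
  have f21 := congrArg (· ⬝ᵥ v₁) e2
  have f22 := congrArg (· ⬝ᵥ v₂) e2
  simp only [hS, Matrix.mulVec_sub, Matrix.mulVec_add, Matrix.mulVec_smul, Matrix.add_mulVec,
    Matrix.one_mulVec, Matrix.smul_mulVec, sub_dotProduct, add_dotProduct, smul_dotProduct,
    smul_eq_mul, hsym, hc] at f11 f12 f21 f22
  rw [Matrix.sub_mulVec, sub_dotProduct, hAT]
  constructor
  · linear_combination -f11 - f22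
  · linear_combination -f12 + f21
end
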